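/- arXiv:2401.02904 — 3 statements merged into one kernel-verified Lean document; each statement's English description precedes it below -/
import Mathlib

section
/- Let V be a random variable with values in a standard Borel space 𝒱 and U a random variable with values in {−1,+1}, jointly distributed, such that the marginal law of U is uniform on {−1,+1}. Fix two points z^- = (x^-,y^-) and z^+ = (x^+,y^+) in 𝒵 = 𝒳×𝒴, fix y ∈ 𝒴, and let h: 𝒱×𝒵 → [0,1] be jointly measurable. Writing z^{U} for z^+ when U=+1 and z^- when U=−1 (and z^{−U} for the opposite point, with label y^{U}, y^{−U} respectively), one has E[𝟙{y^{U}=y}·h(V,z^{U}) − 𝟙{y^{−U}=y}·h(V,z^{−U})] ≤ sqrt(2·max(𝟙{y^-=y}, 𝟙{y^+=y})·I(V;U)), where I(V;U) = KL(P_{V,U} ‖ P_V ⊗ P_U) is the mutual information between V and U. -/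
/-!
By the Donsker–Varadhan inequality `E_P[t f] ≤ KL(P‖Q) + log E_Q[exp (t f)]`, if `f` is
`Q`-sub-Gaussian with parameter `c` then `E_P[t f] ≤ KL(P‖Q) + c t² / 2` for every `t`. This
quadratic in `t` has nonpositive discriminant, which is `(E_P f)² ≤ 2 c KL(P‖Q)`; for bounded `f`
the constant `c` comes from Hoeffding's lemma.

Take `P` the joint law of `(V, U)`, `Q` the product of its marginals, and `f(v, u) = u g(v)` with
`g(v) = 𝟙{y⁺=y} h(v, z⁺) − 𝟙{y⁻=y} h(v, z⁻)`. The integrand is `f(V, U)`, the mean of `f` under `Q`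
is zero because `E U = 0`, and `|f| = |g| ≤ max(𝟙{y⁻=y}, 𝟙{y⁺=y})`.
-/

open MeasureTheory ProbabilityTheory
open scoped ENNReal

noncomputable section

open Classical in
/-- Kullback–Leibler divergence: `∞` unless `μ ≪ ν` and the log-likelihood ratio is
`μ`-integrable. -/
def KL {α : Type*} [MeasurableSpace α] (μ ν : Measure α) : ℝ≥0∞ :=
  if μ ≪ ν ∧ Integrable (llr μ ν) μ then ENNReal.ofReal (∫ x, llr μ ν x ∂μ) else ∞

section DonskerVaradhan

variable {α : Type*} [MeasurableSpace α] {P Q : Measure α} [IsProbabilityMeasure P] {f : α → ℝ}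

lemma integral_le_integral_llr_add_log_integral_exp [SigmaFinite Q] (hPQ : P ≪ Q)
    (hllr : Integrable (llr P Q) P) (hf : Integrable f P)
    (hexp : Integrable (fun x ↦ Real.exp (f x)) Q) :
    ∫ x, f x ∂P ≤ ∫ x, llr P Q x ∂P + Real.log (∫ x, Real.exp (f x) ∂Q) := by
  have : NeZero Q := ⟨fun hQ ↦ IsProbabilityMeasure.ne_zero P
    (Measure.absolutelyContinuous_zero_iff.mp (hQ ▸ hPQ))⟩
  have : IsProbabilityMeasure (Q.tilted f) := isProbabilityMeasure_tilted hexp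
  have gibbs : 0 ≤ ∫ x, llr P (Q.tilted f) x ∂P := by
    simpa using InformationTheory.integral_llr_add_sub_measure_univ_nonneg
      (hPQ.trans (absolutelyContinuous_tilted hexp))
      (integrable_llr_tilted_right hPQ hf hllr hexp)
  rw [integral_llr_tilted_right hPQ hf hexp hllr] at gibbs
  linarith

lemma sq_integral_le_of_hasSubgaussianMGF [SigmaFinite Q] {c : NNReal} (hPQ : P ≪ Q)
    (hllr : Integrable (llr P Q) P) (hf : Integrable f P) (hsub : HasSubgaussianMGF f c Q) :
    (∫ x, f x ∂P) ^ 2 ≤ 2 * c * ∫ x, llr P Q x ∂P := by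
  have quadratic_nonneg (t : ℝ) :
      0 ≤ (c / 2 : ℝ) * (t * t) + (-∫ x, f x ∂P) * t + ∫ x, llr P Q x ∂P := by
    have variational := integral_le_integral_llr_add_log_integral_exp hPQ hllr (hf.const_mul t)
      (hsub.integrable_exp_mul t)
    have cgf_le : Real.log (∫ x, Real.exp (t * f x) ∂Q) ≤ c * t ^ 2 / 2 := hsub.cgf_le t
    rw [integral_const_mul] at variational
    linarith
  have := discrim_le_zero quadratic_nonneg
  rw [discrim] at this
  linarith

theorem ofReal_abs_integral_sub_integral_le_of_mem_Icc [IsProbabilityMeasure Q] {a b : ℝ}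
    (hf : Measurable f) (hab : ∀ x, f x ∈ Set.Icc a b) :
    ENNReal.ofReal |∫ x, f x ∂P - ∫ x, f x ∂Q| ≤
      (ENNReal.ofReal ((b - a) ^ 2 / 2) * KL P Q) ^ (1 / 2 : ℝ) := by
  obtain rfl | hne := eq_or_ne a b
  · have hconst : f = fun _ ↦ a := funext fun x ↦ by simpa using hab x
    simp [hconst]
  have hpos : 0 < (b - a) ^ 2 / 2 := by have := sub_ne_zero.mpr hne.symm; positivity
  rw [KL]
  split_ifs with hKL
  · obtain ⟨hPQ, hllr⟩ := hKL
    have hfP : Integrable f P := .of_mem_Icc a b hf.aemeasurable (.of_forall hab)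
    have hsub := hasSubgaussianMGF_of_mem_Icc (μ := Q) hf.aemeasurable (.of_forall hab)
    have hparam : 2 * (((‖b - a‖₊ / 2) ^ 2 : NNReal) : ℝ) = (b - a) ^ 2 / 2 := by
      simp only [NNReal.coe_pow, NNReal.coe_div, coe_nnnorm, NNReal.coe_ofNat, Real.norm_eq_abs,
        div_pow, sq_abs]
      ring
    have hsq : |∫ x, f x ∂P - ∫ x, f x ∂Q| ^ 2 ≤ (b - a) ^ 2 / 2 * ∫ x, llr P Q x ∂P := by
      rw [sq_abs, ← hparam]
      simpa [integral_sub hfP (integrable_const _)] using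
        sq_integral_le_of_hasSubgaussianMGF hPQ hllr (hfP.sub (integrable_const _)) hsub
    rw [← ENNReal.ofReal_mul hpos.le,
      ENNReal.ofReal_rpow_of_nonneg ((sq_nonneg _).trans hsq) (by norm_num), ← Real.sqrt_eq_rpow]
    exact ENNReal.ofReal_le_ofReal (Real.le_sqrt_of_sq_le hsq)
  · simp [ENNReal.mul_top, hpos]

end DonskerVaradhan

section MutualInformation

variable {Ω α β : Type*} [MeasurableSpace Ω] [MeasurableSpace α] [MeasurableSpace β]

/-- The mutual information `I(X;Y)` of two random variables on `(Ω, μ)`: the divergence of their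
joint law from the product of the marginals. -/
def mutualInfo (μ : Measure Ω) (X : Ω → α) (Y : Ω → β) : ℝ≥0∞ :=
  KL (μ.map fun ω ↦ (X ω, Y ω)) ((μ.map X).prod (μ.map Y))

theorem ofReal_abs_integral_sub_integral_prod_le_mutualInfo {μ : Measure Ω}
    [IsProbabilityMeasure μ] {X : Ω → α} {Y : Ω → β} {f : α × β → ℝ} {a b : ℝ}
    (hX : AEMeasurable X μ) (hY : AEMeasurable Y μ) (hf : Measurable f)
    (hab : ∀ p, f p ∈ Set.Icc a b) :
    ENNReal.ofReal |∫ ω, f (X ω, Y ω) ∂μ - ∫ p, f p ∂(μ.map X).prod (μ.map Y)| ≤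
      (ENNReal.ofReal ((b - a) ^ 2 / 2) * mutualInfo μ X Y) ^ (1 / 2 : ℝ) := by
  have hXY := hX.prodMk hY
  have := Measure.isProbabilityMeasure_map hX
  have := Measure.isProbabilityMeasure_map hY
  have := Measure.isProbabilityMeasure_map hXY
  rw [← integral_map hXY hf.aestronglyMeasurable]
  exact ofReal_abs_integral_sub_integral_le_of_mem_Icc hf hab

end MutualInformation

section RandomSign

/-- The sign `±1` encoded by a Boolean, with `true` standing for `+1`. -/
def boolSign (b : Bool) : ℝ := if b then 1 else -1

lemma abs_boolSign (b : Bool) : |boolSign b| = 1 := by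
  cases b <;> simp [boolSign]

lemma integral_boolSign {ρ : Measure Bool} [IsFiniteMeasure ρ] (hρ : ρ {true} = ρ {false}) :
    ∫ b, boolSign b ∂ρ = 0 := by
  rw [integral_fintype .of_finite]
  simp [boolSign, measureReal_def, hρ]

lemma sub_ite_swap_eq_boolSign_mul {ι : Type*} (k : ι → ℝ) (i j : ι) (b : Bool) :
    k (if b then i else j) - k (if b then j else i) = boolSign b * (k i - k j) := by
  cases b <;> simp [boolSign]

theorem ofReal_abs_integral_boolSign_mul_le_mutualInfo {Ω α : Type*} [MeasurableSpace Ω]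
    [MeasurableSpace α] {μ : Measure Ω} [IsProbabilityMeasure μ] {V : Ω → α} {U : Ω → Bool}
    {g : α → ℝ} {c : ℝ} (hV : AEMeasurable V μ) (hU : AEMeasurable U μ)
    (hUsymm : μ.map U {true} = μ.map U {false}) (hg : Measurable g) (hgc : ∀ v, |g v| ≤ c) :
    ENNReal.ofReal |∫ ω, boolSign (U ω) * g (V ω) ∂μ| ≤
      (ENNReal.ofReal (2 * c ^ 2) * mutualInfo μ V U) ^ (1 / 2 : ℝ) := by
  let f : α × Bool → ℝ := fun p ↦ g p.1 * boolSign p.2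
  have hf : Measurable f :=
    (hg.comp measurable_fst).mul ((measurable_of_finite boolSign).comp measurable_snd)
  have hfc (p : α × Bool) : f p ∈ Set.Icc (-c) c := by
    rw [Set.mem_Icc, ← abs_le, abs_mul, abs_boolSign, mul_one]
    exact hgc p.1
  have hmean : ∫ p, f p ∂(μ.map V).prod (μ.map U) = 0 := by
    rw [integral_prod_mul, integral_boolSign hUsymm, mul_zero]
  have hconst : (c - -c) ^ 2 / 2 = 2 * c ^ 2 := by ring
  simpa only [hmean, sub_zero, hconst, f, mul_comm (boolSign _)] using
    ofReal_abs_integral_sub_integral_prod_le_mutualInfo hV hU hf hfc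

end RandomSign

lemma abs_ite_sub_ite_le_max {p q : Prop} [Decidable p] [Decidable q] {a b : ℝ}
    (ha : a ∈ Set.Icc 0 1) (hb : b ∈ Set.Icc 0 1) :
    |(if p then a else 0) - (if q then b else 0)| ≤
      max (if q then 1 else 0) (if p then 1 else 0) := by
  obtain ⟨ha0, ha1⟩ := ha
  obtain ⟨hb0, hb1⟩ := hb
  rw [abs_le]
  split_ifs <;> constructor <;> norm_num <;> linarith

lemma ofReal_two_mul_sq_max_ite (p q : Prop) [Decidable p] [Decidable q] :
    ENNReal.ofReal (2 * (max (if p then 1 else 0) (if q then 1 else 0)) ^ 2) =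
      2 * max (if p then 1 else 0) (if q then 1 else 0) := by
  split_ifs <;> simp

theorem supersample_key_lemma_general
    {Ω 𝒱 𝒳 𝒴 : Type*} [MeasurableSpace Ω] [MeasurableSpace 𝒱] [DecidableEq 𝒴]
    (μ : Measure Ω) [IsProbabilityMeasure μ]
    (V : Ω → 𝒱) (hV : AEMeasurable V μ)
    (U : Ω → Bool) (hU : AEMeasurable U μ)
    (hUunif : ∀ b, μ.map U {b} = 1 / 2)
    (zm zp : 𝒳 × 𝒴) (y : 𝒴)
    (h : 𝒱 → 𝒳 × 𝒴 → ℝ) (hh : ∀ z, Measurable fun v ↦ h v z)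
    (h01 : ∀ v z, h v z ∈ Set.Icc (0 : ℝ) 1) :
    ENNReal.ofReal
        |∫ ω,
          ((if (if U ω then zp else zm).2 = y then h (V ω) (if U ω then zp else zm) else 0) -
            (if (if U ω then zm else zp).2 = y then h (V ω) (if U ω then zm else zp) else 0)) ∂μ|
      ≤ (2 * max (if zm.2 = y then (1 : ℝ≥0∞) else 0) (if zp.2 = y then (1 : ℝ≥0∞) else 0) *
          mutualInfo μ V U) ^ (1 / 2 : ℝ) := by
  let k : 𝒱 → 𝒳 × 𝒴 → ℝ := fun v z ↦ if z.2 = y then h v z else 0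
  have hk (z : 𝒳 × 𝒴) : Measurable fun v ↦ k v z := .ite (.const _) (hh z) measurable_const
  have hgap (v : 𝒱) := abs_ite_sub_ite_le_max (p := zp.2 = y) (q := zm.2 = y) (h01 v zp) (h01 v zm)
  have hsign (ω : Ω) := sub_ite_swap_eq_boolSign_mul (k (V ω)) zp zm (U ω)
  rw [← ofReal_two_mul_sq_max_ite, integral_congr_ae (.of_forall hsign)]
  exact ofReal_abs_integral_boolSign_mul_le_mutualInfo hV hU
    ((hUunif true).trans (hUunif false).symm) ((hk zp).sub (hk zm)) hgap

/-- **Lemma B.2**: `V` a random variable in a standard Borel space, `U` uniform on `{−1,+1}`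
(encoded as `Bool`, `true ↔ +1`), `z⁻, z⁺` two fixed points of `𝒳 × 𝒴`, `h` a `[0,1]`-valued
jointly measurable function.  Then
`E[𝟙{y^U=y}·h(V,z^U) − 𝟙{y^{−U}=y}·h(V,z^{−U})]
  ≤ sqrt (2 max(𝟙{y⁻=y}, 𝟙{y⁺=y}) I(V;U))`. -/
theorem supersample_key_lemma
    {Ω 𝒱 𝒳 𝒴 : Type*} [MeasurableSpace Ω]
    [MeasurableSpace 𝒱] [StandardBorelSpace 𝒱]
    [MeasurableSpace 𝒳] [StandardBorelSpace 𝒳]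
    [MeasurableSpace 𝒴] [Countable 𝒴] [MeasurableSingletonClass 𝒴] [DecidableEq 𝒴]
    (μ : Measure Ω) [IsProbabilityMeasure μ]
    (V : Ω → 𝒱) (hV : Measurable V)
    (U : Ω → Bool) (hU : Measurable U)
    (hUunif : ∀ b, μ.map U {b} = 1 / 2)
    (zm zp : 𝒳 × 𝒴) (y : 𝒴)
    (h : 𝒱 → 𝒳 × 𝒴 → ℝ) (hh : Measurable fun p : 𝒱 × (𝒳 × 𝒴) => h p.1 p.2)
    (h01 : ∀ v z, h v z ∈ Set.Icc (0 : ℝ) 1) :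
    ENNReal.ofReal
        (∫ ω,
          ((if (if U ω then zp else zm).2 = y then h (V ω) (if U ω then zp else zm) else 0) -
            (if (if U ω then zm else zp).2 = y then h (V ω) (if U ω then zm else zp) else 0)) ∂μ)
      ≤ (2 * max (if zm.2 = y then (1 : ℝ≥0∞) else 0) (if zp.2 = y then (1 : ℝ≥0∞) else 0) *
          KL (μ.map fun ω => (V ω, U ω)) ((μ.map V).prod (μ.map U))) ^ (1 / 2 : ℝ) := by
  exact (ENNReal.ofReal_le_ofReal (le_abs_self _)).trans <|
    supersample_key_lemma_general μ V hV.aemeasurable U hU.aemeasurable hUunif zm zp y h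
      (fun _ ↦ hh.comp measurable_prodMk_right) h01
end
end

section
/- Assume the loss has the form ℓ(w,x,y) = ℓ(f_w(x),y) with values in [0,1]. Then the super-sample class-generalization error of class y satisfies |gen_y| ≤ E_{Z_{[2n]}}[(1/n^y) Σ_{i=1}^n sqrt(2·max(𝟙{Y_i^-=y}, 𝟙{Y_i^+=y})·I_{Z_{[2n]}}(f_W(X_i^±);U_i))]. -/
open MeasureTheory ProbabilityTheory
open scoped ENNReal

noncomputable section

/-- Fair coin measure on `Bool` (the law of a uniform `{−1,+1}` selector, `true ↔ +1`). -/
def coin : Measure Bool :=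
  (2 : ℝ≥0∞)⁻¹ • Measure.dirac true + (2 : ℝ≥0∞)⁻¹ • Measure.dirac false

/-- Disintegrated conditional mutual information `I_z(A;B)` given `Z = z`, defined through
regular conditional distributions: `KL(P_{A,B|Z=z} ‖ P_{A|Z=z} ⊗ P_{B|Z=z})`. -/
def dCMI {Ω γ α β : Type*} [MeasurableSpace Ω] [MeasurableSpace γ]
    [MeasurableSpace α] [StandardBorelSpace α] [Nonempty α]
    [MeasurableSpace β] [StandardBorelSpace β] [Nonempty β]
    (μ : Measure Ω) [IsFiniteMeasure μ]
    (A : Ω → α) (B : Ω → β) (Z : Ω → γ) (z : γ) : ℝ≥0∞ :=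
  KL (condDistrib (fun ω => (A ω, B ω)) Z μ z)
    ((condDistrib A Z μ z).prod (condDistrib B Z μ z))

/-- The super-sample entry selected by `u`, i.e. `z^{u}` (the training sample):
`zz = (z⁻, z⁺)` and `u = true` means `+1`. -/
def trainSel {𝒵 : Type*} (zz : 𝒵 × 𝒵) (u : Bool) : 𝒵 := if u then zz.2 else zz.1

/-- The super-sample entry not selected by `u`, i.e. `z^{−u}` (the test sample). -/
def testSel {𝒵 : Type*} (zz : 𝒵 × 𝒵) (u : Bool) : 𝒵 := if u then zz.1 else zz.2

/-! Conditionally on `Z = z`, the selector `Uᵢ` is still a fair coin, and flipping it while keeping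
the prediction pair fixed negates the difference of test and training class losses. This difference
is therefore centred under the product of the conditional laws of the prediction pair and of `Uᵢ`,
and it vanishes unless one of the two labels is `y`. Hoeffding's lemma bounds its exponential
moments under the product law, and the Donsker–Varadhan inequality transfers this to its mean under
the joint conditional law at the cost of the conditional mutual information. Averaging over `z` and
summing over `i` gives the bound. -/

open InformationTheory
open scoped NNReal

section KullbackLeibler

variable {α : Type*} [MeasurableSpace α] {P Q : Measure α}
  [IsProbabilityMeasure P] [IsProbabilityMeasure Q]

lemma KL_eq_klDiv : KL P Q = klDiv P Q := by
  unfold KL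
  split_ifs with h
  · simp [klDiv_of_ac_of_integrable h.1 h.2]
  · exact (klDiv_eq_top_iff.2 (not_and.1 h)).symm

lemma integral_sub_log_integral_exp_le_toReal_klDiv {g : α → ℝ} (hPQ : klDiv P Q ≠ ∞)
    (hgP : Integrable g P) (hgQ : Integrable (fun x => Real.exp (g x)) Q) :
    ∫ x, g x ∂P - Real.log (∫ x, Real.exp (g x) ∂Q) ≤ (klDiv P Q).toReal := by
  obtain ⟨hac, hint⟩ := klDiv_ne_top_iff.1 hPQ
  have : IsProbabilityMeasure (Q.tilted g) := isProbabilityMeasure_tilted hgQ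
  have h_gibbs : 0 ≤ ∫ x, llr P (Q.tilted g) x ∂P := by
    rw [← toReal_klDiv_of_measure_eq (hac.trans (absolutelyContinuous_tilted hgQ)) (by simp)]
    exact ENNReal.toReal_nonneg
  rw [integral_llr_tilted_right hac hgP hgQ hint] at h_gibbs
  rw [toReal_klDiv_of_measure_eq hac (by simp)]
  linarith

lemma sq_integral_le_two_mul_toReal_klDiv {g : α → ℝ} {c : ℝ≥0} (hg : HasSubgaussianMGF g c Q)
    (hgP : Integrable g P) (hPQ : klDiv P Q ≠ ∞) :
    (∫ x, g x ∂P) ^ 2 ≤ 2 * c * (klDiv P Q).toReal := by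
  have h_quadratic (t : ℝ) :
      0 ≤ (c / 2 : ℝ) * (t * t) + -(∫ x, g x ∂P) * t + (klDiv P Q).toReal := by
    have h_dv := integral_sub_log_integral_exp_le_toReal_klDiv hPQ (hgP.const_mul t)
      (hg.integrable_exp_mul t)
    have h_cgf : Real.log (∫ x, Real.exp (t * g x) ∂Q) ≤ c * t ^ 2 / 2 := hg.cgf_le t
    rw [integral_const_mul] at h_dv
    linarith
  have h_discrim := discrim_le_zero h_quadratic
  rw [discrim] at h_discrim
  linarith

lemma enorm_integral_le_mul_klDiv_rpow {g : α → ℝ} {M : ℝ≥0} (hg : AEMeasurable g Q)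
    (hgM : ∀ x, |g x| ≤ M) (hgQ : ∫ x, g x ∂Q = 0) :
    ‖∫ x, g x ∂P‖ₑ ≤ M * (2 * klDiv P Q) ^ (1 / 2 : ℝ) := by
  by_cases hPQ : klDiv P Q = ∞
  -- At `M = 0` the right-hand side is `0 * ∞ = 0`.
  · obtain rfl | hM := eq_or_ne M 0
    · have hg0 (x : α) : g x = 0 := by simpa using hgM x
      simp [hg0]
    · simp [hPQ, hM]
  have hg_Icc (x : α) : g x ∈ Set.Icc (-M : ℝ) M := abs_le.1 (hgM x)
  have hgP : Integrable g P := .of_mem_Icc _ _ (hg.mono_ac (klDiv_ne_top_iff.1 hPQ).1)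
    (.of_forall hg_Icc)
  have h_subgaussian := hasSubgaussianMGF_of_mem_Icc_of_integral_eq_zero hg (.of_forall hg_Icc) hgQ
  have h_sq : (∫ x, g x ∂P) ^ 2 ≤ M ^ 2 * (2 * (klDiv P Q).toReal) := by
    have h_param : (‖(M : ℝ) - -M‖₊ / 2) ^ 2 = M ^ 2 := by
      rw [sub_neg_eq_add, ← two_mul, nnnorm_mul]
      simp
    have h := sq_integral_le_two_mul_toReal_klDiv h_subgaussian hgP hPQ
    rw [h_param] at h
    push_cast at h
    linarith
  calc ‖∫ x, g x ∂P‖ₑ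
      = ENNReal.ofReal |∫ x, g x ∂P| := Real.enorm_eq_ofReal_abs _
    _ ≤ ENNReal.ofReal (M * (2 * (klDiv P Q).toReal) ^ (1 / 2 : ℝ)) := by
        gcongr
        rw [← Real.sqrt_eq_rpow, ← Real.sqrt_sq M.coe_nonneg, ← Real.sqrt_mul (sq_nonneg _)]
        exact Real.abs_le_sqrt h_sq
    _ = M * (2 * klDiv P Q) ^ (1 / 2 : ℝ) := by
        rw [ENNReal.ofReal_mul M.coe_nonneg, ← ENNReal.ofReal_rpow_of_nonneg (by positivity)
          (by norm_num), ENNReal.ofReal_mul zero_le_two, ENNReal.ofReal_toReal hPQ]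
        simp

end KullbackLeibler

section ProductLaw

variable {Ω α β ι : Type*} [MeasurableSpace Ω] [MeasurableSpace α] [MeasurableSpace β]
  {μ : Measure Ω} {ν : Measure α} [IsProbabilityMeasure ν] {X : Ω → α}

lemma indepFun_of_hasLaw_prod [IsFiniteMeasure μ] {ρ : Measure β} [IsProbabilityMeasure ρ]
    {Y : Ω → β} (h : HasLaw (fun ω => (X ω, Y ω)) (ν.prod ρ) μ) : IndepFun X Y μ :=
  (indepFun_iff_hasLaw_prodMk_prod (measurePreserving_fst.fun_comp_hasLaw h)
    (measurePreserving_snd.fun_comp_hasLaw h)).2 h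

lemma hasLaw_eval_of_hasLaw_prod_pi [Fintype ι] {ρ : ι → Measure β}
    [∀ i, IsProbabilityMeasure (ρ i)] {Y : Ω → ι → β}
    (h : HasLaw (fun ω => (X ω, Y ω)) (ν.prod (Measure.pi ρ)) μ) (i : ι) :
    HasLaw (fun ω => Y ω i) (ρ i) μ :=
  ((measurePreserving_eval ρ i).comp measurePreserving_snd).fun_comp_hasLaw h

end ProductLaw

section ConditionalMutualInformation

variable {Ω α β γ : Type*} [MeasurableSpace Ω] [MeasurableSpace γ]
  [MeasurableSpace α] [StandardBorelSpace α] [Nonempty α]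
  [MeasurableSpace β] [StandardBorelSpace β] [Nonempty β]
  {μ : Measure Ω} {Z : Ω → γ} {A : Ω → α} {B : Ω → β}

lemma condDistrib_ae_eq_const_of_indepFun [IsFiniteMeasure μ] (hZ : AEMeasurable Z μ)
    (hB : AEMeasurable B μ) (hZB : IndepFun Z B μ) :
    condDistrib B Z μ =ᵐ[μ.map Z] Kernel.const γ (μ.map B) := by
  apply condDistrib_ae_eq_of_measure_eq_compProd Z hB
  rw [Measure.compProd_const, hZB.map_prod_eq_prod_map_map hZ hB]

lemma enorm_integral_mul_le_lintegral_dCMI_rpow [IsProbabilityMeasure μ]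
    (hZ : AEMeasurable Z μ) (hA : AEMeasurable A μ) (hB : AEMeasurable B μ)
    (hZB : IndepFun Z B μ) {s : β → ℝ} (hs : Measurable s) (hs1 : ∀ b, |s b| ≤ 1)
    (hsB : ∫ ω, s (B ω) ∂μ = 0) {g : γ → α → ℝ} (hg : Measurable fun p : γ × α => g p.1 p.2)
    (hg_int : Integrable (fun ω => s (B ω) * g (Z ω) (A ω)) μ)
    {M : γ → ℝ≥0} (hgM : ∀ z a, |g z a| ≤ M z) :
    ‖∫ ω, s (B ω) * g (Z ω) (A ω) ∂μ‖ₑ ≤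
      ∫⁻ z, M z * (2 * dCMI μ A B Z z) ^ (1 / 2 : ℝ) ∂(μ.map Z) := by
  have hAB : AEMeasurable (fun ω => (A ω, B ω)) μ := hA.prodMk hB
  have hZAB : AEMeasurable (fun ω => (Z ω, A ω, B ω)) μ := hZ.prodMk hAB
  have hsg : Measurable fun p : γ × α × β => s p.2.2 * g p.1 p.2.1 :=
    (hs.comp measurable_snd.snd).mul (hg.comp (measurable_fst.prodMk measurable_snd.fst))
  have h_disint : ∫ ω, s (B ω) * g (Z ω) (A ω) ∂μ =
      ∫ z, ∫ p, s p.2 * g z p.1 ∂(condDistrib (fun ω => (A ω, B ω)) Z μ z) ∂(μ.map Z) := by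
    rw [← integral_map (f := fun p : γ × α × β => s p.2.2 * g p.1 p.2.1) hZAB
      hsg.aestronglyMeasurable, ← compProd_map_condDistrib hAB, Measure.integral_compProd]
    rw [compProd_map_condDistrib hAB]
    exact (integrable_map_measure hsg.aestronglyMeasurable hZAB).2 hg_int
  have : IsProbabilityMeasure (μ.map Z) := Measure.isProbabilityMeasure_map hZ
  rw [h_disint]
  refine (enorm_integral_le_lintegral_enorm _).trans (lintegral_mono_ae ?_)
  filter_upwards [condDistrib_ae_eq_const_of_indepFun hZ hB hZB] with z hz
  rw [dCMI, KL_eq_klDiv]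
  refine enorm_integral_le_mul_klDiv_rpow (hsg.comp measurable_prodMk_left).aemeasurable ?_ ?_
  · intro p
    rw [abs_mul]
    exact (mul_le_of_le_one_left (abs_nonneg _) (hs1 p.2)).trans (hgM z p.1)
  · simp_rw [mul_comm (s _)]
    rw [integral_prod_mul, hz, Kernel.const_apply, integral_map hB hs.aestronglyMeasurable, hsB,
      mul_zero]

end ConditionalMutualInformation

lemma finsetSum_lintegral_le_lintegral_finsetSum {α ι : Type*} [MeasurableSpace α] (μ : Measure α)
    (s : Finset ι) (F : ι → α → ℝ≥0∞) :
    ∑ i ∈ s, ∫⁻ a, F i a ∂μ ≤ ∫⁻ a, ∑ i ∈ s, F i a ∂μ := by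
  classical
  induction s using Finset.induction_on with
  | empty => simp
  | insert i s hi ih =>
    simp only [Finset.sum_insert hi]
    exact (add_le_add_right ih _).trans (le_lintegral_add _ _)

section SuperSample

/-- The selector bit read as the sign `±1`, with `true ↔ +1`. -/
def selectorSign (u : Bool) : ℝ := if u then 1 else -1

lemma abs_selectorSign (u : Bool) : |selectorSign u| = 1 := by
  cases u <;> simp [selectorSign]

lemma integral_selectorSign_coin : ∫ u, selectorSign u ∂coin = 0 := by
  rw [coin, integral_add_measure (.smul_measure .of_finite (by simp))
    (.smul_measure .of_finite (by simp))]
  simp [selectorSign]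

instance : IsProbabilityMeasure coin where
  measure_univ := by simp [coin, ENNReal.inv_two_add_inv_two]

variable {𝒳 𝒴 Yhat : Type*} (ℓ : Yhat → 𝒴 → ℝ) (C : Set 𝒴) [DecidablePred (· ∈ C)]

/-- The loss `𝟙{y ∈ C} ℓ(ŷ, y)` restricted to labels in a group `C` of classes; the loss of a single
class `y` is the case `C = {y}`. -/
def classLoss (ŷ : Yhat) (y : 𝒴) : ℝ := if y ∈ C then ℓ ŷ y else 0

/-- The class loss of the pair `zz = (z⁻, z⁺)` at `z⁻` minus that at `z⁺`, for the predictions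
`p = (ŷ⁻, ŷ⁺)`; it is the test loss minus the training loss when `z⁺` is the training sample. -/
def classLossGap (zz : (𝒳 × 𝒴) × (𝒳 × 𝒴)) (p : Yhat × Yhat) : ℝ :=
  classLoss ℓ C p.1 zz.1.2 - classLoss ℓ C p.2 zz.2.2

/-- The indicator `max(𝟙{Y⁻ ∈ C}, 𝟙{Y⁺ ∈ C})`. -/
def classIndicator (zz : (𝒳 × 𝒴) × (𝒳 × 𝒴)) : ℝ≥0 :=
  max (if zz.1.2 ∈ C then 1 else 0) (if zz.2.2 ∈ C then 1 else 0)

lemma classLoss_testSel_sub_classLoss_trainSel (h : 𝒳 → Yhat) (zz : (𝒳 × 𝒴) × (𝒳 × 𝒴))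
    (u : Bool) :
    classLoss ℓ C (h (testSel zz u).1) (testSel zz u).2 -
        classLoss ℓ C (h (trainSel zz u).1) (trainSel zz u).2 =
      selectorSign u * classLossGap ℓ C zz (h zz.1.1, h zz.2.1) := by
  cases u <;> simp [testSel, trainSel, selectorSign, classLossGap]

variable {ℓ}

lemma abs_classLossGap_le (hℓ01 : ∀ ŷ y, ℓ ŷ y ∈ Set.Icc (0 : ℝ) 1) (zz : (𝒳 × 𝒴) × (𝒳 × 𝒴))
    (p : Yhat × Yhat) : |classLossGap ℓ C zz p| ≤ classIndicator C zz := by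
  obtain ⟨h_minus_nonneg, h_minus_le⟩ := hℓ01 p.1 zz.1.2
  obtain ⟨h_plus_nonneg, h_plus_le⟩ := hℓ01 p.2 zz.2.2
  rw [abs_le]
  unfold classLossGap classLoss classIndicator
  split_ifs <;> constructor <;> norm_num <;> linarith

lemma classIndicator_le_one (zz : (𝒳 × 𝒴) × (𝒳 × 𝒴)) : classIndicator C zz ≤ 1 := by
  unfold classIndicator
  split_ifs <;> simp

lemma classIndicator_mul_rpow_half (zz : (𝒳 × 𝒴) × (𝒳 × 𝒴)) (K : ℝ≥0∞) :
    classIndicator C zz * (2 * K) ^ (1 / 2 : ℝ) =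
      (2 * max (if zz.1.2 ∈ C then (1 : ℝ≥0∞) else 0) (if zz.2.2 ∈ C then (1 : ℝ≥0∞) else 0) * K)
        ^ (1 / 2 : ℝ) := by
  unfold classIndicator
  split_ifs <;> simp

variable {C} [MeasurableSpace 𝒳] [MeasurableSpace 𝒴] [MeasurableSpace Yhat]

lemma measurable_classLoss (hℓ : Measurable fun p : Yhat × 𝒴 => ℓ p.1 p.2)
    (hC : MeasurableSet C) : Measurable fun p : Yhat × 𝒴 => classLoss ℓ C p.1 p.2 :=
  Measurable.ite (measurable_snd hC) hℓ measurable_const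

lemma measurable_classLossGap (hℓ : Measurable fun p : Yhat × 𝒴 => ℓ p.1 p.2)
    (hC : MeasurableSet C) :
    Measurable fun p : ((𝒳 × 𝒴) × (𝒳 × 𝒴)) × (Yhat × Yhat) => classLossGap ℓ C p.1 p.2 :=
  ((measurable_classLoss hℓ hC).comp (measurable_snd.fst.prodMk measurable_fst.fst.snd)).sub
    ((measurable_classLoss hℓ hC).comp (measurable_snd.snd.prodMk measurable_fst.snd.snd))

variable {Ω : Type*} [MeasurableSpace Ω] {μ : Measure Ω}

lemma integrable_selectorSign_mul_classLossGap [IsFiniteMeasure μ]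
    {V : Ω → (𝒳 × 𝒴) × (𝒳 × 𝒴)}
    {A : Ω → Yhat × Yhat} {B : Ω → Bool} (hV : AEMeasurable V μ) (hA : AEMeasurable A μ)
    (hB : AEMeasurable B μ) (hℓ : Measurable fun p : Yhat × 𝒴 => ℓ p.1 p.2)
    (hℓ01 : ∀ ŷ y, ℓ ŷ y ∈ Set.Icc (0 : ℝ) 1) (hC : MeasurableSet C) :
    Integrable (fun ω => selectorSign (B ω) * classLossGap ℓ C (V ω) (A ω)) μ := by
  have h_meas : AEMeasurable (fun ω => selectorSign (B ω) * classLossGap ℓ C (V ω) (A ω)) μ :=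
    ((Measurable.of_discrete (f := selectorSign)).comp_aemeasurable hB).mul
      ((measurable_classLossGap hℓ hC).comp_aemeasurable (hV.prodMk hA))
  refine Integrable.of_bound h_meas.aestronglyMeasurable 1 (.of_forall fun ω => ?_)
  rw [Real.norm_eq_abs, abs_mul, abs_selectorSign, one_mul]
  exact (abs_classLossGap_le C hℓ01 _ _).trans (mod_cast classIndicator_le_one C _)

variable [StandardBorelSpace Yhat] [Nonempty Yhat] [IsProbabilityMeasure μ]

lemma enorm_integral_selectorSign_mul_classLossGap_le {γ : Type*} [MeasurableSpace γ] {Z : Ω → γ}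
    {A : Ω → Yhat × Yhat} {B : Ω → Bool} (hZ : AEMeasurable Z μ) (hA : AEMeasurable A μ)
    (hB : HasLaw B coin μ) (hZB : IndepFun Z B μ)
    {v : γ → (𝒳 × 𝒴) × (𝒳 × 𝒴)} (hv : Measurable v)
    (hℓ : Measurable fun p : Yhat × 𝒴 => ℓ p.1 p.2)
    (hℓ01 : ∀ ŷ y, ℓ ŷ y ∈ Set.Icc (0 : ℝ) 1) (hC : MeasurableSet C) :
    ‖∫ ω, selectorSign (B ω) * classLossGap ℓ C (v (Z ω)) (A ω) ∂μ‖ₑ ≤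
      ∫⁻ z, classIndicator C (v z) * (2 * dCMI μ A B Z z) ^ (1 / 2 : ℝ) ∂(μ.map Z) := by
  have h_centred : ∫ ω, selectorSign (B ω) ∂μ = 0 :=
    (hB.integral_comp Measurable.of_discrete.aestronglyMeasurable).trans integral_selectorSign_coin
  exact enorm_integral_mul_le_lintegral_dCMI_rpow hZ hA hB.aemeasurable hZB .of_discrete
    (fun b => (abs_selectorSign b).le) h_centred (g := fun z p => classLossGap ℓ C (v z) p)
    ((measurable_classLossGap hℓ hC).comp ((hv.comp measurable_fst).prodMk measurable_snd))
    (integrable_selectorSign_mul_classLossGap (hv.comp_aemeasurable hZ) hA hB.aemeasurable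
      hℓ hℓ01 hC)
    (fun z p => abs_classLossGap_le C hℓ01 (v z) p)

variable {𝒲 ι : Type*} [MeasurableSpace 𝒲] {Z : Ω → ι → (𝒳 × 𝒴) × (𝒳 × 𝒴)} {U : Ω → ι → Bool}
  {W : Ω → 𝒲} {f : 𝒲 → 𝒳 → Yhat}

theorem class_fCMI_bound_general [Fintype ι]
    (hZ : AEMeasurable Z μ) (hW : AEMeasurable W μ)
    (hU : ∀ i, HasLaw (fun ω => U ω i) coin μ) (hZU : ∀ i, IndepFun Z (fun ω => U ω i) μ)
    (hf : Measurable fun p : 𝒲 × 𝒳 => f p.1 p.2)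
    (hℓ : Measurable fun p : Yhat × 𝒴 => ℓ p.1 p.2)
    (hℓ01 : ∀ ŷ y, ℓ ŷ y ∈ Set.Icc (0 : ℝ) 1)
    (hC : MeasurableSet C) {c : ℝ} (hc : 0 ≤ c) :
    ENNReal.ofReal
        |∫ ω, c * ∑ i, (classLoss ℓ C (f (W ω) (testSel (Z ω i) (U ω i)).1)
              (testSel (Z ω i) (U ω i)).2 -
            classLoss ℓ C (f (W ω) (trainSel (Z ω i) (U ω i)).1)
              (trainSel (Z ω i) (U ω i)).2) ∂μ|
      ≤ ∫⁻ z, ENNReal.ofReal c *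
            ∑ i, (2 * max (if (z i).1.2 ∈ C then (1 : ℝ≥0∞) else 0)
                          (if (z i).2.2 ∈ C then (1 : ℝ≥0∞) else 0) *
                  dCMI μ (fun ω => (f (W ω) ((Z ω i).1.1), f (W ω) ((Z ω i).2.1)))
                    (fun ω => U ω i) Z z) ^ (1 / 2 : ℝ)
          ∂(μ.map Z) := by
  let A (i : ι) (ω : Ω) : Yhat × Yhat := (f (W ω) (Z ω i).1.1, f (W ω) (Z ω i).2.1)
  have hZi (i : ι) : AEMeasurable (fun ω => Z ω i) μ :=
    (measurable_pi_apply i).comp_aemeasurable hZ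
  have hA (i : ι) : AEMeasurable (A i) μ :=
    (hf.comp_aemeasurable (hW.prodMk (hZi i).fst.fst)).prodMk
      (hf.comp_aemeasurable (hW.prodMk (hZi i).snd.fst))
  have h_int (i : ι) := integrable_selectorSign_mul_classLossGap (hZi i) (hA i)
    (hU i).aemeasurable hℓ hℓ01 hC
  simp_rw [classLoss_testSel_sub_classLoss_trainSel, ← classIndicator_mul_rpow_half]
  rw [← Real.enorm_eq_ofReal_abs, integral_const_mul, integral_finsetSum _ (fun i _ => h_int i),
    enorm_mul, Real.enorm_of_nonneg hc, lintegral_const_mul' _ _ ENNReal.ofReal_ne_top]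
  gcongr
  calc ‖∑ i, ∫ ω, selectorSign (U ω i) * classLossGap ℓ C (Z ω i) (A i ω) ∂μ‖ₑ
      ≤ ∑ i, ‖∫ ω, selectorSign (U ω i) * classLossGap ℓ C (Z ω i) (A i ω) ∂μ‖ₑ :=
        enorm_sum_le _ _
    _ ≤ ∑ i, ∫⁻ z, classIndicator C (z i) *
          (2 * dCMI μ (A i) (fun ω => U ω i) Z z) ^ (1 / 2 : ℝ) ∂(μ.map Z) :=
        Finset.sum_le_sum fun i _ => enorm_integral_selectorSign_mul_classLossGap_le hZ (hA i)
          (hU i) (hZU i) (measurable_pi_apply i) hℓ hℓ01 hC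
    _ ≤ _ := finsetSum_lintegral_le_lintegral_finsetSum _ _ _

end SuperSample

/-- **Theorem 3 (class-f-CMI bound)**: in the super-sample setting with predictions
`f_w(x)` and a bounded loss `ℓ(f_w(x), y) ∈ [0,1]`, the class-generalization error of class
`y` satisfies
`|gen_y| ≤ E_{Z_{[2n]}}[(1/n^y) Σ_i sqrt (2 max(𝟙{Y_i⁻=y},𝟙{Y_i⁺=y}) I_{Z_{[2n]}}(f_W(X_i^±);U_i))]`. -/
theorem class_fCMI_bound
    {Ω 𝒲 𝒳 𝒴 Yhat : Type*}
    [mΩ : MeasurableSpace Ω] [StandardBorelSpace Ω] [Nonempty Ω]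
    [MeasurableSpace 𝒲] [StandardBorelSpace 𝒲] [Nonempty 𝒲]
    [MeasurableSpace 𝒳] [StandardBorelSpace 𝒳]
    [MeasurableSpace 𝒴] [Countable 𝒴] [MeasurableSingletonClass 𝒴] [DecidableEq 𝒴]
    [MeasurableSpace Yhat] [StandardBorelSpace Yhat] [Nonempty Yhat]
    (μ : Measure Ω) [IsProbabilityMeasure μ]
    (n : ℕ) (hn : 0 < n)
    (PZ : Measure (𝒳 × 𝒴)) [IsProbabilityMeasure PZ]
    (Z : Ω → Fin n → (𝒳 × 𝒴) × (𝒳 × 𝒴)) (hZ : Measurable Z)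
    (U : Ω → Fin n → Bool) (hU : Measurable U)
    (W : Ω → 𝒲) (hW : Measurable W)
    (hlaw : μ.map (fun ω => (Z ω, U ω)) =
      (Measure.pi fun _ : Fin n => PZ.prod PZ).prod (Measure.pi fun _ : Fin n => coin))
    (hSle : MeasurableSpace.comap (fun ω (i : Fin n) => trainSel (Z ω i) (U ω i))
        inferInstance ≤ mΩ)
    (hMarkov : CondIndepFun
      (MeasurableSpace.comap (fun ω (i : Fin n) => trainSel (Z ω i) (U ω i)) inferInstance)
      hSle W (fun ω => (Z ω, U ω)) μ)
    -- the model prediction map and the loss on predictions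
    (f : 𝒲 → 𝒳 → Yhat) (hf : Measurable fun p : 𝒲 × 𝒳 => f p.1 p.2)
    (ℓ : Yhat → 𝒴 → ℝ) (hℓ : Measurable fun p : Yhat × 𝒴 => ℓ p.1 p.2)
    (hℓ01 : ∀ p y', ℓ p y' ∈ Set.Icc (0 : ℝ) 1)
    (y : 𝒴) (hy : 0 < PZ (Prod.snd ⁻¹' {y})) :
    ENNReal.ofReal
        |∫ ω, (1 / ((n : ℝ) * (PZ (Prod.snd ⁻¹' {y})).toReal)) *
            ∑ i, ((if (testSel (Z ω i) (U ω i)).2 = y then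
                    ℓ (f (W ω) (testSel (Z ω i) (U ω i)).1) (testSel (Z ω i) (U ω i)).2 else 0) -
                  (if (trainSel (Z ω i) (U ω i)).2 = y then
                    ℓ (f (W ω) (trainSel (Z ω i) (U ω i)).1) (trainSel (Z ω i) (U ω i)).2 else 0))
          ∂μ|
      ≤ ∫⁻ z, ENNReal.ofReal (1 / ((n : ℝ) * (PZ (Prod.snd ⁻¹' {y})).toReal)) *
            ∑ i, (2 * max (if (z i).1.2 = y then (1 : ℝ≥0∞) else 0)
                          (if (z i).2.2 = y then (1 : ℝ≥0∞) else 0) *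
                  dCMI μ (fun ω => (f (W ω) ((Z ω i).1.1), f (W ω) ((Z ω i).2.1)))
                    (fun ω => U ω i) Z z) ^ (1 / 2 : ℝ)
          ∂(μ.map Z) := by
  have hZU_law : HasLaw (fun ω => (Z ω, U ω)) _ μ := ⟨(hZ.prodMk hU).aemeasurable, hlaw⟩
  exact class_fCMI_bound_general hZ.aemeasurable hW.aemeasurable
    (hasLaw_eval_of_hasLaw_prod_pi hZU_law)
    (fun i => (indepFun_of_hasLaw_prod hZU_law).comp measurable_id (measurable_pi_apply i))
    hf hℓ hℓ01 (measurableSet_singleton y) (by positivity)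
end
end

section
/- Let (W,X,Y) be jointly distributed random variables, with W and X taking values in standard Borel spaces and Y taking values in a countable set 𝒴. Then Σ_{y: P(Y=y)>0} P(Y=y)·KL(P_{W,X|Y=y} ‖ P_W ⊗ P_{X|Y=y}) = KL(P_{W,X,Y} ‖ P_W ⊗ P_{X,Y}) = I(W;(X,Y)), and consequently, for every σ ≥ 0, Σ_{y: P(Y=y)>0} P(Y=y)·sqrt(2·σ²·KL(P_{W,X|Y=y} ‖ P_W ⊗ P_{X|Y=y})) ≤ sqrt(2·σ²·I(W;(X,Y))); that is, when the subGaussian parameter is the same for all classes, the class-wise KL bound of Corollary 1 is tighter than the individual-sample mutual information bound of Bu et al. -/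
open MeasureTheory ProbabilityTheory
open scoped ENNReal

noncomputable section

/-!
Conditionally on `Y`, the law of `(W, X)` is a kernel `κ`, and both `P_{W,X,Y}` and
`P_W ⊗ P_{X,Y}` become, after moving `Y` to the front, composition-products over the same
measure `P_Y`, with kernels `κ` and `y ↦ P_W ⊗ P_{X|Y=y}`. The density of two such
composition-products is the fibrewise density, so their divergence is the `P_Y`-average of the
fibrewise divergences; for countable `𝒴` this average is the sum over classes. The comparison of
the bounds is Jensen's inequality for the square root under `P_Y`.
-/

open InformationTheory

section KullbackLeibler

variable {α β : Type*} {mα : MeasurableSpace α} {mβ : MeasurableSpace β}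

lemma KL_eq_klDiv_s9 {μ ν : Measure α} (h : μ Set.univ = ν Set.univ) : KL μ ν = klDiv μ ν := by
  by_cases hac : μ ≪ ν ∧ Integrable (llr μ ν) μ
  · simp [KL, hac, klDiv_of_ac_of_integrable hac.1 hac.2, measureReal_def, h]
  · rw [KL, if_neg hac, not_ne_iff.mp (mt klDiv_ne_top_iff.mp hac)]

lemma klDiv_map_measurableEquiv (μ ν : Measure α) [IsFiniteMeasure μ] [IsFiniteMeasure ν]
    (e : α ≃ᵐ β) : klDiv (μ.map e) (ν.map e) = klDiv μ ν := by
  refine (klDiv_map_le _ _ e.measurable).antisymm ?_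
  simpa using klDiv_map_le (μ.map e) (ν.map e) e.symm.measurable

variable {μ : Measure α} {κ η : Kernel α β} [IsFiniteKernel κ] [IsFiniteKernel η]
  [MeasurableSpace.CountableOrCountablyGenerated α β]

lemma compProd_eq_withDensity_rnDeriv [SFinite μ] (h : ∀ᵐ a ∂μ, κ a ≪ η a) :
    μ ⊗ₘ κ = (μ ⊗ₘ η).withDensity (fun p ↦ κ.rnDeriv η p.1 p.2) := by
  rw [← Measure.compProd_withDensity (κ.measurable_rnDeriv η)]
  refine Measure.compProd_congr ?_
  filter_upwards [h] with a ha using (Kernel.withDensity_rnDeriv_eq ha).symm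

lemma lintegral_klDiv_eq_top_of_not_ae_ac (h : ¬ ∀ᵐ a ∂μ, κ a ≪ η a) :
    ∫⁻ a, klDiv (κ a) (η a) ∂μ = ∞ := by
  let nonAC : Set α := {a | ¬ κ a ≪ η a}
  have measurableSet_nonAC : MeasurableSet nonAC :=
    (Kernel.measurableSet_absolutelyContinuous κ η).compl
  refine top_le_iff.mp ?_
  calc ∞ = ∫⁻ _ in nonAC, ∞ ∂μ := by rw [setLIntegral_const, ENNReal.top_mul (mt ae_iff.mpr h)]
    _ = ∫⁻ a in nonAC, klDiv (κ a) (η a) ∂μ :=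
      setLIntegral_congr_fun measurableSet_nonAC fun a ha ↦ (klDiv_of_not_ac ha).symm
    _ ≤ ∫⁻ a, klDiv (κ a) (η a) ∂μ := setLIntegral_le_lintegral _ _

theorem klDiv_compProd_right [IsFiniteMeasure μ] :
    klDiv (μ ⊗ₘ κ) (μ ⊗ₘ η) = ∫⁻ a, klDiv (κ a) (η a) ∂μ := by
  by_cases h : ∀ᵐ a ∂μ, κ a ≪ η a
  · have rnDeriv_fibrewise : (μ ⊗ₘ κ).rnDeriv (μ ⊗ₘ η)
        =ᵐ[μ ⊗ₘ η] fun p ↦ κ.rnDeriv η p.1 p.2 := by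
      rw [compProd_eq_withDensity_rnDeriv h]
      exact Measure.rnDeriv_withDensity _ (κ.measurable_rnDeriv η)
    calc klDiv (μ ⊗ₘ κ) (μ ⊗ₘ η)
        = ∫⁻ p, ENNReal.ofReal (klFun (κ.rnDeriv η p.1 p.2).toReal) ∂(μ ⊗ₘ η) := by
          rw [klDiv_eq_lintegral_klFun_of_ac (Measure.AbsolutelyContinuous.compProd_right h)]
          refine lintegral_congr_ae ?_
          filter_upwards [rnDeriv_fibrewise] with p hp using by rw [hp]
      _ = ∫⁻ a, ∫⁻ b, ENNReal.ofReal (klFun (κ.rnDeriv η a b).toReal) ∂(η a) ∂μ :=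
          Measure.lintegral_compProd (by fun_prop)
      _ = ∫⁻ a, klDiv (κ a) (η a) ∂μ := by
          refine lintegral_congr_ae ?_
          filter_upwards [h] with a ha
          rw [klDiv_eq_lintegral_klFun_of_ac ha]
          refine lintegral_congr_ae ?_
          filter_upwards [κ.rnDeriv_eq_rnDeriv_measure (η := η) (a := a)] with b hb using by rw [hb]
  · rw [klDiv_of_not_ac (mt Measure.absolutelyContinuous_compProd_right_iff.mp h),
      lintegral_klDiv_eq_top_of_not_ae_ac h]

end KullbackLeibler

section ConditionalLaw

variable {Ω 𝒲 𝒳 𝒴 : Type*} [MeasurableSpace Ω] [MeasurableSpace 𝒲] [MeasurableSpace 𝒳]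
  [MeasurableSpace 𝒴] {μ : Measure Ω} [IsFiniteMeasure μ] {W : Ω → 𝒲} {X : Ω → 𝒳} {Y : Ω → 𝒴}

lemma map_prod_map_prodMk_eq_compProd {κ : Kernel 𝒴 𝒳} [IsFiniteKernel κ]
    (ν : Measure 𝒲) [IsFiniteMeasure ν] (h : HasCondDistrib X Y κ μ) :
    (ν.prod (μ.map fun ω ↦ (X ω, Y ω))).map
        (MeasurableEquiv.prodAssoc.symm.trans MeasurableEquiv.prodComm)
      = μ.map Y ⊗ₘ (Kernel.const 𝒴 ν ×ₖ κ) := by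
  have hX := h.aemeasurable_snd
  have hY := h.aemeasurable_fst
  refine Measure.ext_prod₃ fun {s t u} hs ht hu ↦ ?_
  have swap_law : μ.map (fun ω ↦ (X ω, Y ω)) (u ×ˢ s) = (μ.map Y ⊗ₘ κ) (s ×ˢ u) := by
    rw [← h.map_eq, Measure.map_apply_of_aemeasurable (by fun_prop) (hu.prod hs),
      Measure.map_apply_of_aemeasurable (by fun_prop) (hs.prod hu)]
    congr 1 with ω
    simp [and_comm]
  have preimage_rect : (MeasurableEquiv.prodAssoc.symm.trans MeasurableEquiv.prodComm) ⁻¹'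
      (s ×ˢ t ×ˢ u) = (t ×ˢ u ×ˢ s : Set (𝒲 × 𝒳 × 𝒴)) := by
    ext ⟨w, x, y⟩
    change _ ∧ _ ∧ _ ↔ _ ∧ _ ∧ _
    tauto
  rw [MeasurableEquiv.map_apply, preimage_rect, Measure.prod_prod, swap_law,
    Measure.compProd_apply_prod hs hu, Measure.compProd_apply_prod hs (ht.prod hu),
    ← lintegral_const_mul _ (κ.measurable_coe hu)]
  simp [Kernel.prod_apply_prod]

theorem klDiv_map_prod_eq_lintegral_of_hasCondDistrib {κ : Kernel 𝒴 (𝒲 × 𝒳)} [IsFiniteKernel κ]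
    [MeasurableSpace.CountableOrCountablyGenerated 𝒴 (𝒲 × 𝒳)]
    (h : HasCondDistrib (fun ω ↦ (W ω, X ω)) Y κ μ) :
    klDiv (μ.map fun ω ↦ (W ω, (X ω, Y ω))) ((μ.map W).prod (μ.map fun ω ↦ (X ω, Y ω)))
      = ∫⁻ y, klDiv (κ y) ((μ.map W).prod (κ y).snd) ∂(μ.map Y) := by
  let e : 𝒲 × 𝒳 × 𝒴 ≃ᵐ 𝒴 × 𝒲 × 𝒳 :=
    MeasurableEquiv.prodAssoc.symm.trans MeasurableEquiv.prodComm
  have hW : AEMeasurable W μ := h.aemeasurable_snd.fst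
  have hX : AEMeasurable X μ := h.aemeasurable_snd.snd
  have hY : AEMeasurable Y μ := h.aemeasurable_fst
  have joint_law : (μ.map fun ω ↦ (W ω, (X ω, Y ω))).map e = μ.map Y ⊗ₘ κ := by
    rw [← h.map_eq, AEMeasurable.map_map_of_aemeasurable (by fun_prop) (by fun_prop)]
    rfl
  rw [← klDiv_map_measurableEquiv _ _ e, joint_law, map_prod_map_prodMk_eq_compProd _ h.snd,
    klDiv_compProd_right]
  simp [Kernel.prod_apply, Kernel.snd_apply, Measure.snd]

variable [Countable 𝒴] [MeasurableSingletonClass 𝒴]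

lemma lintegral_map_eq_tsum_preimage_singleton {μ : Measure Ω} (hY : Measurable Y)
    (f : 𝒴 → ℝ≥0∞) :
    ∫⁻ y, f y ∂(μ.map Y) = ∑' y, μ (Y ⁻¹' {y}) * f y := by
  rw [lintegral_countable']
  refine tsum_congr fun y ↦ ?_
  rw [Measure.map_apply hY (measurableSet_singleton y), mul_comm]

/-- The elementary conditional law `y ↦ P_{X|Y=y}` as a kernel. Classes with `P(Y=y) = 0` get the
zero measure, so this is a finite kernel but in general not a Markov kernel. -/
def fiberLaw (μ : Measure Ω) (X : Ω → 𝒳) (Y : Ω → 𝒴) : Kernel 𝒴 𝒳 :=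
  Kernel.ofFunOfCountable fun y ↦ (μ[|Y ⁻¹' {y}]).map X

@[simp]
lemma fiberLaw_apply (μ : Measure Ω) (X : Ω → 𝒳) (Y : Ω → 𝒴) (y : 𝒴) :
    fiberLaw μ X Y y = (μ[|Y ⁻¹' {y}]).map X := rfl

instance (μ : Measure Ω) (X : Ω → 𝒳) (Y : Ω → 𝒴) : IsFiniteKernel (fiberLaw μ X Y) :=
  ⟨1, ENNReal.one_lt_top, fun y ↦ by
    by_cases hX : AEMeasurable X μ[|Y ⁻¹' {y}]
    · simpa [Measure.map_apply_of_aemeasurable hX .univ] using prob_le_one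
    · simp [Measure.map_of_not_aemeasurable hX]⟩

lemma hasCondDistrib_fiberLaw (hX : Measurable X) (hY : Measurable Y) :
    HasCondDistrib X Y (fiberLaw μ X Y) μ where
  aemeasurable := by fun_prop
  map_eq := by
    ext s hs
    let A : Set Ω := (fun ω ↦ (Y ω, X ω)) ⁻¹' s
    have fiber_mass (y : 𝒴) : μ (Y ⁻¹' {y}) * fiberLaw μ X Y y (Prod.mk y ⁻¹' s)
        = μ.restrict A (Y ⁻¹' {y}) := by
      have hy : MeasurableSet (Y ⁻¹' {y}) := hY (measurableSet_singleton y)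
      rw [fiberLaw_apply, Measure.map_apply hX (measurable_prodMk_left hs), mul_comm,
        cond_mul_eq_inter hy, Measure.restrict_apply hy]
      congr 1 with ω
      simp only [A, Set.mem_inter_iff, Set.mem_preimage, Set.mem_singleton_iff]
      grind
    rw [Measure.map_apply (by fun_prop) hs, Measure.compProd_apply hs,
      lintegral_map_eq_tsum_preimage_singleton hY, tsum_congr fiber_mass]
    simpa [Measure.map_apply hY] using
      lintegral_map_eq_tsum_preimage_singleton (μ := μ.restrict A) hY 1

theorem klDiv_map_prod_eq_tsum (hW : Measurable W) (hX : Measurable X) (hY : Measurable Y) :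
    klDiv (μ.map fun ω ↦ (W ω, (X ω, Y ω))) ((μ.map W).prod (μ.map fun ω ↦ (X ω, Y ω)))
      = ∑' y, μ (Y ⁻¹' {y}) * klDiv ((μ[|Y ⁻¹' {y}]).map fun ω ↦ (W ω, X ω))
          ((μ.map W).prod ((μ[|Y ⁻¹' {y}]).map X)) := by
  rw [klDiv_map_prod_eq_lintegral_of_hasCondDistrib (hasCondDistrib_fiberLaw (hW.prodMk hX) hY),
    lintegral_map_eq_tsum_preimage_singleton hY]
  simp only [fiberLaw_apply, Measure.snd_map_prodMk hW]

lemma KL_map_prodMk_prod_eq_klDiv {μ : Measure Ω} [SFinite μ] {ν : Measure 𝒲}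
    [IsProbabilityMeasure ν] (hW : Measurable W) (hX : Measurable X) :
    KL (μ.map fun ω ↦ (W ω, X ω)) (ν.prod (μ.map X))
      = klDiv (μ.map fun ω ↦ (W ω, X ω)) (ν.prod (μ.map X)) := by
  refine KL_eq_klDiv_s9 ?_
  rw [← Set.univ_prod_univ, Measure.prod_prod, Set.univ_prod_univ, measure_univ (μ := ν), one_mul,
    Measure.map_apply (hW.prodMk hX) .univ, Measure.map_apply hX .univ, Set.preimage_univ,
    Set.preimage_univ]

theorem KL_map_prod_eq_tsum {μ : Measure Ω} [IsProbabilityMeasure μ] (hW : Measurable W)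
    (hX : Measurable X) (hY : Measurable Y) :
    KL (μ.map fun ω ↦ (W ω, (X ω, Y ω))) ((μ.map W).prod (μ.map fun ω ↦ (X ω, Y ω)))
      = ∑' y, μ (Y ⁻¹' {y}) * KL ((μ[|Y ⁻¹' {y}]).map fun ω ↦ (W ω, X ω))
          ((μ.map W).prod ((μ[|Y ⁻¹' {y}]).map X)) := by
  have := Measure.isProbabilityMeasure_map (μ := μ) hW.aemeasurable
  rw [KL_map_prodMk_prod_eq_klDiv hW (hX.prodMk hY), klDiv_map_prod_eq_tsum hW hX hY]
  simp only [KL_map_prodMk_prod_eq_klDiv hW hX]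

end ConditionalLaw

lemma lintegral_rpow_le_rpow_lintegral {α : Type*} {mα : MeasurableSpace α} {μ : Measure α}
    [IsProbabilityMeasure μ] {f : α → ℝ≥0∞} (hf : AEMeasurable f μ) {r : ℝ} (hr₀ : 0 ≤ r)
    (hr₁ : r ≤ 1) : ∫⁻ a, f a ^ r ∂μ ≤ (∫⁻ a, f a ∂μ) ^ r := by
  simpa using ENNReal.lintegral_mul_norm_pow_le (g := fun _ ↦ 1) hf aemeasurable_const hr₀
    (sub_nonneg.mpr hr₁) (add_sub_cancel r 1)

theorem classwise_KL_decomposition_and_tighter_than_Bu_general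
    {Ω 𝒲 𝒳 𝒴 : Type*} [MeasurableSpace Ω]
    [MeasurableSpace 𝒲] [MeasurableSpace 𝒳]
    [MeasurableSpace 𝒴] [Countable 𝒴] [MeasurableSingletonClass 𝒴]
    (μ : Measure Ω) [IsProbabilityMeasure μ]
    (W : Ω → 𝒲) (hW : Measurable W)
    (X : Ω → 𝒳) (hX : Measurable X)
    (Y : Ω → 𝒴) (hY : Measurable Y)
    (σ : ℝ) :
    (∑' y : 𝒴, μ (Y ⁻¹' {y}) *
        KL ((μ[|Y ⁻¹' {y}]).map fun ω => (W ω, X ω))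
          ((μ.map W).prod ((μ[|Y ⁻¹' {y}]).map X))
      = KL (μ.map fun ω => (W ω, (X ω, Y ω)))
          ((μ.map W).prod (μ.map fun ω => (X ω, Y ω)))) ∧
    ∑' y : 𝒴, μ (Y ⁻¹' {y}) *
        (ENNReal.ofReal (2 * σ ^ 2) *
            KL ((μ[|Y ⁻¹' {y}]).map fun ω => (W ω, X ω))
              ((μ.map W).prod ((μ[|Y ⁻¹' {y}]).map X))) ^ (1 / 2 : ℝ)
      ≤ (ENNReal.ofReal (2 * σ ^ 2) *
            KL (μ.map fun ω => (W ω, (X ω, Y ω)))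
              ((μ.map W).prod (μ.map fun ω => (X ω, Y ω)))) ^ (1 / 2 : ℝ) := by
  have := Measure.isProbabilityMeasure_map (μ := μ) hY.aemeasurable
  rw [KL_map_prod_eq_tsum hW hX hY]
  refine ⟨rfl, ?_⟩
  rw [← lintegral_map_eq_tsum_preimage_singleton hY, ← lintegral_map_eq_tsum_preimage_singleton hY,
    ← lintegral_const_mul _ (measurable_of_countable _)]
  exact lintegral_rpow_le_rpow_lintegral (measurable_of_countable _).aemeasurable
    (by norm_num) (by norm_num)

/-- **Appendix C.4**: the class-wise conditional KL divergences average (over the label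
distribution) exactly to `I(W;(X,Y))`, and consequently, by Jensen's inequality, the
class-wise KL bound of Corollary 1 is tighter than the individual-sample mutual information
bound of Bu et al.  (Summands with `P(Y=y) = 0` contribute `0` since `0 * ∞ = 0` in `ℝ≥0∞`,
so the `tsum` below coincides with the sum over classes of positive probability.) -/
theorem classwise_KL_decomposition_and_tighter_than_Bu
    {Ω 𝒲 𝒳 𝒴 : Type*} [MeasurableSpace Ω]
    [MeasurableSpace 𝒲] [StandardBorelSpace 𝒲]
    [MeasurableSpace 𝒳] [StandardBorelSpace 𝒳]
    [MeasurableSpace 𝒴] [Countable 𝒴] [MeasurableSingletonClass 𝒴]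
    (μ : Measure Ω) [IsProbabilityMeasure μ]
    (W : Ω → 𝒲) (hW : Measurable W)
    (X : Ω → 𝒳) (hX : Measurable X)
    (Y : Ω → 𝒴) (hY : Measurable Y)
    (σ : ℝ) (hσ : 0 ≤ σ) :
    (∑' y : 𝒴, μ (Y ⁻¹' {y}) *
        KL ((μ[|Y ⁻¹' {y}]).map fun ω => (W ω, X ω))
          ((μ.map W).prod ((μ[|Y ⁻¹' {y}]).map X))
      = KL (μ.map fun ω => (W ω, (X ω, Y ω)))
          ((μ.map W).prod (μ.map fun ω => (X ω, Y ω)))) ∧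
    ∑' y : 𝒴, μ (Y ⁻¹' {y}) *
        (ENNReal.ofReal (2 * σ ^ 2) *
            KL ((μ[|Y ⁻¹' {y}]).map fun ω => (W ω, X ω))
              ((μ.map W).prod ((μ[|Y ⁻¹' {y}]).map X))) ^ (1 / 2 : ℝ)
      ≤ (ENNReal.ofReal (2 * σ ^ 2) *
            KL (μ.map fun ω => (W ω, (X ω, Y ω)))
              ((μ.map W).prod (μ.map fun ω => (X ω, Y ω)))) ^ (1 / 2 : ℝ) :=
  classwise_KL_decomposition_and_tighter_than_Bu_general μ W hW X hX Y hY σ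
end
end
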